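/- Fractional Sobolev-in-time bound for u^l (Lemma 3.10): for every α ∈ (0, 1/2) and all T > 0, L ≥ 0, g₀ ≥ 0, A > 0, B ≥ 0, D ≥ 0 there exists a constant C ≥ 0, depending only on α, T, L, g₀, A, B, D, such that for every N ≥ 1, every discrete setting (V, m, τ) with Σ_{K∈V} m K ≤ A, every g Lipschitz with constant L and |g(0)| ≤ g₀, and every initial datum with E[‖u⁰‖_m²] ≤ B and E[|u⁰|₁²] ≤ D: E[∫₀^T ∫₀^T ‖u^l(s) − u^l(t)‖_m² / |t − s|^{1+2α} ds dt] ≤ C. -/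

import Mathlib

open MeasureTheory ProbabilityTheory

/-- Discrete `L²` norm squared: `‖w‖_m² = Σ_K m K · (w K)²`. -/
noncomputable def normSq {V : Type} [Fintype V] (m : V → ℝ) (w : V → ℝ) : ℝ :=
  ∑ K, m K * w K ^ 2

/-- Discrete `H¹` seminorm squared: `|w|₁² = (1/2) Σ_K Σ_L τ K L · (w K − w L)²`. -/
noncomputable def seminormSq {V : Type} [Fintype V] (τ : V → V → ℝ) (w : V → ℝ) : ℝ :=
  (1 / 2) * ∑ K, ∑ L, τ K L * (w K - w L) ^ 2

/-- The semi-implicit finite-volume scheme for the stochastic heat equation in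
abstract graph form, driven by a continuous-time Brownian motion `W` with respect
to a filtration `F` indexed by `[0, T]`: cell measures `m`, symmetric nonnegative
transmissibilities `τ`, `N ≥ 1` time steps of size `Δt = T/N`, `W 0 = 0` a.s.,
`W t` is `F t`-measurable, increments `W t − W s` independent of `F s` and Gaussian
with mean `0` and variance `t − s`, a Lipschitz nonlinearity `g` (constant `L`),
a square-integrable `F 0`-measurable initial datum `u 0`, each `u n` is
`F t_n`-measurable, and the scheme equations with `ΔW_{n+1} = W t_{n+1} − W t_n`. -/
structure BScheme (V : Type) [Fintype V] [Nonempty V]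
    (Ω : Type) [mΩ : MeasurableSpace Ω]
    (T L : ℝ) (g : ℝ → ℝ) (N : ℕ) where
  P : Measure Ω
  probP : IsProbabilityMeasure P
  m : V → ℝ
  m_pos : ∀ K, 0 < m K
  τ : V → V → ℝ
  τ_symm : ∀ K L', τ K L' = τ L' K
  τ_nonneg : ∀ K L', 0 ≤ τ K L'
  τ_diag : ∀ K, τ K K = 0
  T_pos : 0 < T
  N_pos : 1 ≤ N
  L_nonneg : 0 ≤ L
  g_lip : ∀ r s : ℝ, |g r - g s| ≤ L * |r - s|
  F : ℝ → MeasurableSpace Ω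
  F_le : ∀ t, F t ≤ mΩ
  F_mono : Monotone F
  W : ℝ → Ω → ℝ
  W_zero : ∀ᵐ ω ∂P, W 0 ω = 0
  W_meas : ∀ t, 0 ≤ t → t ≤ T → Measurable[F t] (W t)
  W_indep : ∀ s t, 0 ≤ s → s ≤ t → t ≤ T →
    Indep (MeasurableSpace.comap (fun ω => W t ω - W s ω) Real.measurableSpace)
      (F s) P
  W_law : ∀ s t, 0 ≤ s → s ≤ t → t ≤ T →
    P.map (fun ω => W t ω - W s ω) = gaussianReal 0 (Real.toNNReal (t - s))
  u : ℕ → Ω → V → ℝ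
  u_meas : ∀ n, n ≤ N → Measurable[F ((n : ℝ) * (T / N))] (u n)
  u0_int : Integrable (fun ω => normSq m (u 0 ω)) P
  scheme : ∀ n, n < N → ∀ᵐ ω ∂P, ∀ K,
    m K / (T / N) * (u (n + 1) ω K - u n ω K)
      + ∑ L', τ K L' * (u (n + 1) ω K - u (n + 1) ω L')
      = m K / (T / N) * g (u n ω K)
          * (W (((n : ℝ) + 1) * (T / N)) ω - W ((n : ℝ) * (T / N)) ω)

/-- Index `n` of the time interval `[t_n, t_{n+1})` containing `t` (capped at
`N − 1`, matching the convention for the value at `t = T`). -/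
noncomputable def timeIdx (T : ℝ) (N : ℕ) (t : ℝ) : ℕ :=
  min (Nat.floor (t / (T / N))) (N - 1)

/-- Left piecewise-constant time interpolant `u^l`. -/
noncomputable def ul {Ω V : Type} (T : ℝ) (N : ℕ)
    (u : ℕ → Ω → V → ℝ) (t : ℝ) (ω : Ω) : V → ℝ :=
  u (timeIdx T N t) ω

/-- The (continuous-time) discrete stochastic integral
`M(t) K = Σ_{k<N} g(u^k K) · (W(min(t,t_{k+1})) − W(min(t,t_k)))`. -/
noncomputable def Mint {Ω V : Type} (T : ℝ) (N : ℕ) (g : ℝ → ℝ)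
    (u : ℕ → Ω → V → ℝ) (W : ℝ → Ω → ℝ) (t : ℝ) (ω : Ω) (K : V) : ℝ :=
  ∑ k ∈ Finset.range N, g (u k ω K) *
    (W (min t (((k : ℝ) + 1) * (T / N))) ω - W (min t ((k : ℝ) * (T / N))) ω)


/-!
One implicit Euler step is a proximal step: `u^{n+1}` minimises
`‖w - y‖_m² + Δt |w|₁²` over `w`, where `y = uⁿ + ΔW_{n+1} g(uⁿ)`. Hence for every competitor `v`
`‖u^{n+1} - v‖_m² + Δt |u^{n+1}|₁² ≤ ‖y - v‖_m² + Δt |v|₁²`.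
In expectation the noise contributes only its Itô variance when `v` is known at time `t_n`. Taking
`v = 0` and `v = y` gives, with Grönwall, `L²` and `H¹` bounds uniform in `n`; taking `v = uⁱ` with
`i ≤ n` shows that `E‖u^{n+1} - uⁱ‖_m² - E‖uⁿ - uⁱ‖_m²` is `O(Δt)`, so that
`E‖uʲ - uⁱ‖_m² ≤ C |j - i| Δt`.

For two times `s, t` the corresponding `|j - i|` is the number of grid points separating them, and
each grid point `c` contributes the integral of `|t - s|^{-(1+2α)}` over the pairs separated by `c`.
This is finite because `2α < 1`, and bounded independently of `c`; there are `N` grid points,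
and `N Δt = T`.
-/

section BilinearForms

variable {E : Type*} [AddCommGroup E] [Module ℝ E]

-- The proximal inequality: `u` minimises `w ↦ b (w - y) (w - y) + δ * a w w`, so testing its
-- Euler–Lagrange equation against `u - v` and polarising compares it with any competitor `v`.
theorem implicitEuler_le_of_competitor {a b : LinearMap.BilinForm ℝ E} (ha : a.IsPosSemidef)
    (hb : b.IsPosSemidef) {δ : ℝ} (hδ : 0 ≤ δ) {u y : E}
    (hu : ∀ w, b (u - y) w + δ * a u w = 0) (v : E) :
    b (u - v) (u - v) + δ * a u u ≤ b (y - v) (y - v) + δ * a v v := by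
  have dissipation : 0 ≤ δ * a (u - v) (u - v) := mul_nonneg hδ (ha.nonneg _)
  have residual : 0 ≤ b (u - y) (u - y) := hb.nonneg _
  have expand_b : b (y - v) (y - v)
      = b (u - v) (u - v) - 2 * b (u - y) (u - v) + b (u - y) (u - y) := by
    rw [show y - v = (u - v) - (u - y) by abel]
    generalize u - v = p, u - y = q
    simp only [map_sub, LinearMap.sub_apply, hb.eq p q]
    ring
  have expand_a : a (u - v) (u - v) = 2 * a u (u - v) - a u u + a v v := by
    simp only [map_sub, LinearMap.sub_apply, ha.eq v u]
    ring
  linear_combination dissipation + residual - expand_b + δ * expand_a + 2 * hu (u - v)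

end BilinearForms

section DiscreteForms

variable {V : Type} [Fintype V]

/-- The discrete `L²` inner product on cell functions, whose quadratic form is `normSq m`. -/
noncomputable def massForm (m : V → ℝ) : LinearMap.BilinForm ℝ (V → ℝ) :=
  ∑ K, m K • LinearMap.BilinForm.linMulLin (LinearMap.proj K) (LinearMap.proj K)

/-- The discrete Dirichlet form, whose quadratic form is `seminormSq τ`; it is the weak form of the
finite-volume Laplacian. -/
noncomputable def dirichletForm (τ : V → V → ℝ) : LinearMap.BilinForm ℝ (V → ℝ) :=
  let jump (K L : V) := (LinearMap.proj K : (V → ℝ) →ₗ[ℝ] ℝ) - LinearMap.proj L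
  (1 / 2 : ℝ) • ∑ K, ∑ L, τ K L • LinearMap.BilinForm.linMulLin (jump K L) (jump K L)

theorem massForm_apply (m v w : V → ℝ) : massForm m v w = ∑ K, m K * (v K * w K) := by
  simp [massForm]

theorem dirichletForm_apply (τ : V → V → ℝ) (v w : V → ℝ) :
    dirichletForm τ v w = 1 / 2 * ∑ K, ∑ L, τ K L * ((v K - v L) * (w K - w L)) := by
  simp [dirichletForm]

theorem massForm_self (m w : V → ℝ) : massForm m w w = normSq m w := by
  simp only [massForm_apply, normSq, sq]

theorem dirichletForm_self (τ : V → V → ℝ) (w : V → ℝ) :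
    dirichletForm τ w w = seminormSq τ w := by
  simp only [dirichletForm_apply, seminormSq, sq]

theorem normSq_nonneg {m : V → ℝ} (hm : 0 ≤ m) (w : V → ℝ) : 0 ≤ normSq m w :=
  Finset.sum_nonneg fun K _ => mul_nonneg (hm K) (sq_nonneg _)

theorem normSq_sub_comm (m v w : V → ℝ) : normSq m (v - w) = normSq m (w - v) := by
  simp only [normSq, Pi.sub_apply, sub_sq_comm]

theorem continuous_normSq (m : V → ℝ) : Continuous (normSq m) := by
  unfold normSq
  fun_prop

theorem seminormSq_nonneg {τ : V → V → ℝ} (hτ : 0 ≤ τ) (w : V → ℝ) : 0 ≤ seminormSq τ w :=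
  mul_nonneg (by norm_num) <| Finset.sum_nonneg fun K _ => Finset.sum_nonneg fun L _ =>
    mul_nonneg (hτ K L) (sq_nonneg _)

theorem massForm_isPosSemidef {m : V → ℝ} (hm : 0 ≤ m) : (massForm m).IsPosSemidef where
  eq v w := by simp only [massForm_apply, mul_comm (v _)]
  nonneg w := by simpa only [massForm_self] using normSq_nonneg hm w

theorem dirichletForm_isPosSemidef {τ : V → V → ℝ} (hτ : 0 ≤ τ) :
    (dirichletForm τ).IsPosSemidef where
  eq v w := by simp only [dirichletForm_apply, mul_comm (v _ - v _)]
  nonneg w := by simpa only [dirichletForm_self] using seminormSq_nonneg hτ w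

theorem sum_flux_mul_eq_dirichletForm {τ : V → V → ℝ} (hτ : ∀ K L, τ K L = τ L K) (v w : V → ℝ) :
    ∑ K, (∑ L, τ K L * (v K - v L)) * w K = dirichletForm τ v w := by
  have swap : ∑ K, ∑ L, τ K L * (v K - v L) * w K = ∑ K, ∑ L, -(τ K L * (v K - v L) * w L) := by
    rw [Finset.sum_comm]
    refine Finset.sum_congr rfl fun K _ => Finset.sum_congr rfl fun L _ => ?_
    rw [hτ L K]
    ring
  have average : ∑ K, ∑ L, τ K L * ((v K - v L) * (w K - w L))
      = ∑ K, ∑ L, τ K L * (v K - v L) * w K + ∑ K, ∑ L, -(τ K L * (v K - v L) * w L) := by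
    simp only [← Finset.sum_add_distrib]
    refine Finset.sum_congr rfl fun K _ => Finset.sum_congr rfl fun L _ => ?_
    ring
  simp only [Finset.sum_mul, dirichletForm_apply, average, ← swap]
  ring

theorem normSq_comp_le {m : V → ℝ} (hm : 0 ≤ m) {g : ℝ → ℝ} {c : ℝ}
    (hg : ∀ r s, |g r - g s| ≤ c * |r - s|) (w : V → ℝ) :
    normSq m (g ∘ w) ≤ 2 * |g 0| ^ 2 * ∑ K, m K + 2 * c ^ 2 * normSq m w := by
  simp only [normSq, Finset.mul_sum, ← Finset.sum_add_distrib, Function.comp_apply]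
  refine Finset.sum_le_sum fun K _ => ?_
  have lipschitz_sq : (g (w K) - g 0) ^ 2 ≤ c ^ 2 * w K ^ 2 := by
    rw [← sq_abs (g (w K) - g 0), ← sq_abs (w K), ← mul_pow]
    exact pow_le_pow_left₀ (abs_nonneg _) (by simpa using hg (w K) 0) 2
  have young : g (w K) ^ 2 ≤ 2 * |g 0| ^ 2 + 2 * (g (w K) - g 0) ^ 2 := by
    rw [sq_abs]
    nlinarith [sq_nonneg (g (w K) - 2 * g 0)]
  calc m K * g (w K) ^ 2 ≤ m K * (2 * |g 0| ^ 2 + 2 * (c ^ 2 * w K ^ 2)) :=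
        mul_le_mul_of_nonneg_left (by linarith) (hm K)
    _ = 2 * |g 0| ^ 2 * m K + 2 * c ^ 2 * (m K * w K ^ 2) := by ring

theorem seminormSq_comp_le {τ : V → V → ℝ} (hτ : 0 ≤ τ) {g : ℝ → ℝ} {c : ℝ}
    (hg : ∀ r s, |g r - g s| ≤ c * |r - s|) (w : V → ℝ) :
    seminormSq τ (g ∘ w) ≤ c ^ 2 * seminormSq τ w := by
  simp only [seminormSq, mul_left_comm (c ^ 2), Finset.mul_sum (a := c ^ 2), Function.comp_apply]
  gcongr with K _ L _
  · exact hτ K L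
  · rw [← sq_abs (g (w K) - g (w L)), ← sq_abs (w K - w L), ← mul_pow]
    exact pow_le_pow_left₀ (abs_nonneg _) (hg _ _) 2

end DiscreteForms

section IndependentNoise

variable {Ω : Type*} [MeasurableSpace Ω] {P : Measure Ω}
  {E : Type*} [NormedAddCommGroup E] [NormedSpace ℝ E]

theorem integrable_bilin (B : E →L[ℝ] E →L[ℝ] ℝ) {x y : Ω → E}
    (hx : MemLp x 2 P) (hy : MemLp y 2 P) : Integrable (fun ω => B (x ω) (y ω)) P :=
  memLp_one_iff_integrable.1 (B.memLp_of_bilin 1 hx hy)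

variable [MeasurableSpace E] [BorelSpace E]

theorem memLp_two_smul_of_indepFun {ξ : Ω → ℝ} {y : Ω → E} (hξy : IndepFun ξ y P)
    (hξ : MemLp ξ 2 P) (hy : MemLp y 2 P) : MemLp (fun ω => ξ ω • y ω) 2 P := by
  have indep_sq : IndepFun (fun ω => ‖ξ ω‖ ^ 2) (fun ω => ‖y ω‖ ^ 2) P :=
    hξy.comp (φ := fun r : ℝ => ‖r‖ ^ 2) (ψ := fun v : E => ‖v‖ ^ 2) (by fun_prop) (by fun_prop)
  refine (memLp_two_iff_integrable_sq_norm (hξ.1.smul hy.1)).2 ?_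
  simpa only [Pi.smul_apply', norm_smul, mul_pow, Pi.mul_def] using
    indep_sq.integrable_mul (hξ.integrable_norm_pow two_ne_zero)
      (hy.integrable_norm_pow two_ne_zero)

theorem integral_bilin_add_smul_of_indepFun [SecondCountableTopology E] (B : E →L[ℝ] E →L[ℝ] ℝ)
    {ξ : Ω → ℝ} {x y : Ω → E} (hindep : IndepFun ξ (fun ω => (x ω, y ω)) P)
    (hξ : MemLp ξ 2 P) (hξ0 : ∫ ω, ξ ω ∂P = 0) (hx : MemLp x 2 P) (hy : MemLp y 2 P) :
    ∫ ω, B (x ω + ξ ω • y ω) (x ω + ξ ω • y ω) ∂P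
      = ∫ ω, B (x ω) (x ω) ∂P + (∫ ω, ξ ω ^ 2 ∂P) * ∫ ω, B (y ω) (y ω) ∂P := by
  have hξy : MemLp (fun ω => ξ ω • y ω) 2 P :=
    memLp_two_smul_of_indepFun (hindep.comp measurable_id measurable_snd) hξ hy
  have cross : ∫ ω, ξ ω * (B (x ω) (y ω) + B (y ω) (x ω)) ∂P = 0 := by
    have indep_cross : IndepFun ξ (fun ω => B (x ω) (y ω) + B (y ω) (x ω)) P :=
      hindep.comp (φ := id) (ψ := fun z : E × E => B z.1 z.2 + B z.2 z.1) measurable_id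
        (by fun_prop)
    rw [indep_cross.integral_fun_mul_eq_mul_integral hξ.1
      ((integrable_bilin B hx hy).add (integrable_bilin B hy hx)).1, hξ0, zero_mul]
  have square : ∫ ω, ξ ω ^ 2 * B (y ω) (y ω) ∂P
      = (∫ ω, ξ ω ^ 2 ∂P) * ∫ ω, B (y ω) (y ω) ∂P := by
    have indep_square : IndepFun (fun ω => ξ ω ^ 2) (fun ω => B (y ω) (y ω)) P :=
      hindep.comp (φ := fun r : ℝ => r ^ 2) (ψ := fun z : E × E => B z.2 z.2) (by fun_prop)
        (by fun_prop)
    exact indep_square.integral_fun_mul_eq_mul_integral hξ.integrable_sq.1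
      (integrable_bilin B hy hy).1
  have cross_integrable : Integrable (fun ω => ξ ω * (B (x ω) (y ω) + B (y ω) (x ω))) P := by
    simpa [mul_add, Pi.add_def] using (integrable_bilin B hx hξy).add (integrable_bilin B hξy hx)
  have square_integrable : Integrable (fun ω => ξ ω ^ 2 * B (y ω) (y ω)) P := by
    simpa [sq, mul_assoc] using integrable_bilin B hξy hξy
  have expansion : ∀ ω, B (x ω + ξ ω • y ω) (x ω + ξ ω • y ω) = B (x ω) (x ω)
      + (ξ ω * (B (x ω) (y ω) + B (y ω) (x ω)) + ξ ω ^ 2 * B (y ω) (y ω)) := fun ω => by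
    simp only [map_add, map_smul, add_apply, smul_apply, smul_eq_mul]
    ring
  have remainder_integrable : Integrable (fun ω =>
      ξ ω * (B (x ω) (y ω) + B (y ω) (x ω)) + ξ ω ^ 2 * B (y ω) (y ω)) P :=
    cross_integrable.add square_integrable
  simp only [expansion]
  rw [integral_add (integrable_bilin B hx hx) remainder_integrable,
    integral_add cross_integrable square_integrable, cross, square, zero_add]

end IndependentNoise

section SquareIntegrability

variable {V : Type} [Fintype V] {Ω : Type*} [MeasurableSpace Ω] {P : Measure Ω} {x : Ω → V → ℝ}

theorem memLp_comp_of_lipschitzWith {E F : Type*} [NormedAddCommGroup E] [NormedAddCommGroup F]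
    [IsFiniteMeasure P] {p : ENNReal} {c : NNReal} {g : E → F} (hg : LipschitzWith c g)
    {x : Ω → E} (hx : MemLp x p P) : MemLp (fun ω => g (x ω)) p P := by
  have vanishing_at_zero : MemLp (fun ω => g (x ω) - g 0) p P :=
    (hg.sub (LipschitzWith.const (g 0))).comp_memLp (sub_self _) hx
  simpa [Pi.add_def] using vanishing_at_zero.add (memLp_const (g 0))

theorem integrable_normSq (m : V → ℝ) (hx : MemLp x 2 P) :
    Integrable (fun ω => normSq m (x ω)) P := by
  simpa only [LinearMap.toContinuousBilinearMap_apply, massForm_self] using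
    integrable_bilin (massForm m).toContinuousBilinearMap hx hx

theorem integrable_seminormSq (τ : V → V → ℝ) (hx : MemLp x 2 P) :
    Integrable (fun ω => seminormSq τ (x ω)) P := by
  simpa only [LinearMap.toContinuousBilinearMap_apply, dirichletForm_self] using
    integrable_bilin (dirichletForm τ).toContinuousBilinearMap hx hx

theorem memLp_two_of_integrable_normSq {m : V → ℝ} (hm : ∀ K, 0 < m K)
    (hx : AEStronglyMeasurable x P) (hint : Integrable (fun ω => normSq m (x ω)) P) :
    MemLp x 2 P := by
  refine MemLp.of_eval fun K => ?_
  have hxK : AEStronglyMeasurable (fun ω => x ω K) P :=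
    (continuous_apply K).comp_aestronglyMeasurable hx
  refine (memLp_two_iff_integrable_sq hxK).2 ?_
  refine (hint.const_mul (m K)⁻¹).mono' (hxK.pow 2) (.of_forall fun ω => ?_)
  rw [Real.norm_of_nonneg (sq_nonneg _), le_inv_mul_iff₀ (hm K)]
  exact Finset.single_le_sum (f := fun J => m J * x ω J ^ 2)
    (fun J _ => mul_nonneg (hm J).le (sq_nonneg _)) (Finset.mem_univ K)

end SquareIntegrability

theorem le_exp_mul_of_forall_lt_step_le {e : ℕ → ℝ} {N : ℕ} {h b c : ℝ} (he : ∀ n, 0 ≤ e n)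
    (hh : 0 ≤ h) (hb : 0 ≤ b) (hc : 0 ≤ c) (hstep : ∀ n < N, e (n + 1) ≤ e n + h * (b + c * e n))
    {n : ℕ} (hn : n ≤ N) : e n ≤ Real.exp (c * (N * h)) * (e 0 + N * h * b) := by
  have stopped_step : ∀ k ≥ 0, e (min (k + 1) N) ≤ (1 + h * c) * e (min k N) + h * b := by
    intro k _
    rcases lt_or_ge k N with hk | hk
    · rw [min_eq_left hk.le, min_eq_left (Nat.succ_le_of_lt hk)]
      linear_combination hstep k hk
    · rw [min_eq_right hk, min_eq_right (by omega)]
      linear_combination mul_nonneg (mul_nonneg hh hc) (he N) + mul_nonneg hh hb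
  have gronwall := discrete_gronwall (u := fun k => e (min k N)) (he _) stopped_step
    (fun _ _ => mul_nonneg hh hc) (fun _ _ => mul_nonneg hh hb) n.zero_le
  simp only [min_eq_left hn, Nat.zero_min, Finset.sum_const, Nat.card_Ico, tsub_zero,
    nsmul_eq_mul] at gronwall
  calc e n ≤ (e 0 + n * (h * b)) * Real.exp (n * (h * c)) := gronwall
    _ ≤ (e 0 + N * (h * b)) * Real.exp (N * (h * c)) := by
      have := he 0
      gcongr
    _ = Real.exp (c * (N * h)) * (e 0 + N * h * b) := by ring_nf

/-- A common bound on `E[‖uⁱ⁺ᵏ - uⁱ‖_m²] / (k Δt)`, where `e₀ = E[‖u⁰‖_m²]`, `d₀ = E[|u⁰|₁²]`, and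
`γ` bounds `‖g(0)‖_m²` up to the factor `2` of Young's inequality. -/
noncomputable def incrementRate (T L γ e₀ d₀ : ℝ) : ℝ :=
  Real.exp (L ^ 2 * T) * d₀ + (γ + 2 * L ^ 2 * (Real.exp (2 * L ^ 2 * T) * (e₀ + T * γ)))

theorem incrementRate_nonneg {T L γ e₀ d₀ : ℝ} (hT : 0 ≤ T) (hγ : 0 ≤ γ) (he₀ : 0 ≤ e₀)
    (hd₀ : 0 ≤ d₀) : 0 ≤ incrementRate T L γ e₀ d₀ := by
  unfold incrementRate
  positivity

namespace BScheme

variable {V : Type} [Fintype V] [Nonempty V] {Ω : Type} [MeasurableSpace Ω] {T L : ℝ}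
  {g : ℝ → ℝ} {N : ℕ}

theorem timeStep_pos (S : BScheme V Ω T L g N) : 0 < T / N :=
  div_pos S.T_pos (by exact_mod_cast S.N_pos)

theorem natCast_mul_timeStep (S : BScheme V Ω T L g N) : N * (T / N) = T :=
  mul_div_cancel₀ T (by exact_mod_cast (Nat.one_le_iff_ne_zero.1 S.N_pos))

theorem gridTime_chain (S : BScheme V Ω T L g N) {n : ℕ} (hn : n < N) :
    0 ≤ (n : ℝ) * (T / N) ∧ (n : ℝ) * (T / N) ≤ ((n : ℝ) + 1) * (T / N)
      ∧ ((n : ℝ) + 1) * (T / N) ≤ T := by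
  have hstep := S.timeStep_pos.le
  refine ⟨by positivity, by gcongr; linarith, ?_⟩
  calc ((n : ℝ) + 1) * (T / N) ≤ N * (T / N) := by gcongr; exact_mod_cast hn
    _ = T := S.natCast_mul_timeStep

variable (S : BScheme V Ω T L g N)

instance : IsProbabilityMeasure S.P := S.probP

theorem lipschitzWith : LipschitzWith ⟨L, S.L_nonneg⟩ g :=
  LipschitzWith.of_dist_le_mul S.g_lip

/-- The Brownian increment `ΔW_{n+1}` that drives the step from `t_n` to `t_{n+1}`. -/
noncomputable def noise (n : ℕ) (ω : Ω) : ℝ :=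
  S.W (((n : ℝ) + 1) * (T / N)) ω - S.W ((n : ℝ) * (T / N)) ω

/-- The right-hand side `uⁿ + ΔW_{n+1} g(uⁿ)` of the implicit step: what an Euler–Maruyama step
without diffusion would give. -/
noncomputable def explicitStep (n : ℕ) (ω : Ω) : V → ℝ :=
  S.u n ω + S.noise n ω • (g ∘ S.u n ω)

variable {n : ℕ}

theorem hasLaw_noise (hn : n < N) :
    HasLaw (S.noise n) (gaussianReal 0 (T / N).toNNReal) S.P := by
  obtain ⟨hstart, hmono, hend⟩ := S.gridTime_chain hn
  have measurable_W (t : ℝ) (ht : 0 ≤ t) (htT : t ≤ T) : Measurable (S.W t) :=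
    (S.W_meas t ht htT).mono (S.F_le t) le_rfl
  refine ⟨((measurable_W _ (hstart.trans hmono) hend).sub
    (measurable_W _ hstart (hmono.trans hend))).aemeasurable, ?_⟩
  have increment_length : ((n : ℝ) + 1) * (T / N) - n * (T / N) = T / N := by ring
  rw [← increment_length]
  exact S.W_law _ _ hstart hmono hend

theorem memLp_noise (hn : n < N) : MemLp (S.noise n) 2 S.P :=
  (S.hasLaw_noise hn).hasGaussianLaw.memLp_two

theorem integral_noise (hn : n < N) : ∫ ω, S.noise n ω ∂S.P = 0 :=
  (S.hasLaw_noise hn).integral_eq.trans integral_id_gaussianReal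

theorem integral_noise_sq (hn : n < N) : ∫ ω, S.noise n ω ^ 2 ∂S.P = T / N := by
  rw [← variance_of_integral_eq_zero (S.hasLaw_noise hn).aemeasurable (S.integral_noise hn),
    (S.hasLaw_noise hn).variance_eq, variance_id_gaussianReal,
    Real.coe_toNNReal _ S.timeStep_pos.le]

theorem indepFun_noise (hn : n < N) {β : Type*} [MeasurableSpace β] {Z : Ω → β}
    (hZ : Measurable[S.F (n * (T / N))] Z) : IndepFun (S.noise n) Z S.P := by
  obtain ⟨hstart, hmono, hend⟩ := S.gridTime_chain hn
  exact (IndepFun_iff_Indep _ _ _).2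
    (indep_of_indep_of_le_right (S.W_indep _ _ hstart hmono hend) hZ.comap_le)

theorem measurable_u (hn : n ≤ N) : Measurable (S.u n) :=
  (S.u_meas n hn).mono (S.F_le _) le_rfl

theorem measurable_comp_u (hn : n ≤ N) :
    Measurable[S.F (n * (T / N))] fun ω => g ∘ S.u n ω :=
  have measurable_comp_left : Measurable fun w : V → ℝ => g ∘ w :=
    measurable_pi_lambda _ fun K =>
      S.lipschitzWith.continuous.measurable.comp (measurable_pi_apply K)
  measurable_comp_left.comp (S.u_meas n hn)

theorem memLp_comp_u (hu : MemLp (S.u n) 2 S.P) : MemLp (fun ω => g ∘ S.u n ω) 2 S.P :=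
  MemLp.of_eval fun K => memLp_comp_of_lipschitzWith S.lipschitzWith (hu.eval K)

theorem memLp_explicitStep (hn : n < N) (hu : MemLp (S.u n) 2 S.P) :
    MemLp (S.explicitStep n) 2 S.P := by
  exact hu.add (memLp_two_smul_of_indepFun (S.indepFun_noise hn (S.measurable_comp_u hn.le))
    (S.memLp_noise hn) (S.memLp_comp_u hu))

theorem integral_bilin_explicitStep_sub (B : LinearMap.BilinForm ℝ (V → ℝ)) (hn : n < N)
    (hu : MemLp (S.u n) 2 S.P) {v : Ω → V → ℝ} (hv : Measurable[S.F (n * (T / N))] v)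
    (hv2 : MemLp v 2 S.P) :
    ∫ ω, B (S.explicitStep n ω - v ω) (S.explicitStep n ω - v ω) ∂S.P
      = ∫ ω, B (S.u n ω - v ω) (S.u n ω - v ω) ∂S.P
        + T / N * ∫ ω, B (g ∘ S.u n ω) (g ∘ S.u n ω) ∂S.P := by
  have past : Measurable[S.F (n * (T / N))] fun ω => (S.u n ω - v ω, g ∘ S.u n ω) :=
    ((S.u_meas n hn.le).sub hv).prodMk (S.measurable_comp_u hn.le)
  rw [← S.integral_noise_sq hn]
  simpa only [explicitStep, add_sub_right_comm, LinearMap.toContinuousBilinearMap_apply] using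
    integral_bilin_add_smul_of_indepFun B.toContinuousBilinearMap (S.indepFun_noise hn past)
      (S.memLp_noise hn) (S.integral_noise hn) (hu.sub hv2) (S.memLp_comp_u hu)

theorem ae_weakForm (hn : n < N) : ∀ᵐ ω ∂S.P, ∀ w, massForm S.m
    (S.u (n + 1) ω - S.explicitStep n ω) w + T / N * dirichletForm S.τ (S.u (n + 1) ω) w = 0 := by
  filter_upwards [S.scheme n hn] with ω hω w
  have cell_balance (K : V) : S.m K * (S.u (n + 1) ω K - S.explicitStep n ω K)
      + T / N * ∑ J, S.τ K J * (S.u (n + 1) ω K - S.u (n + 1) ω J) = 0 := by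
    have cancel : S.m K / (T / N) * (T / N) = S.m K := div_mul_cancel₀ _ S.timeStep_pos.ne'
    simp only [explicitStep, noise, Pi.add_apply, Pi.smul_apply, Function.comp_apply, smul_eq_mul]
    linear_combination (T / N) * hω K - (S.u (n + 1) ω K - S.u n ω K
      - g (S.u n ω K) * (S.W (((n : ℝ) + 1) * (T / N)) ω - S.W (n * (T / N)) ω)) * cancel
  rw [massForm_apply, ← sum_flux_mul_eq_dirichletForm S.τ_symm, Finset.mul_sum,
    ← Finset.sum_add_distrib]
  refine Finset.sum_eq_zero fun K _ => ?_
  rw [Pi.sub_apply]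
  linear_combination w K * cell_balance K

theorem ae_le_of_competitor (hn : n < N) : ∀ᵐ ω ∂S.P, ∀ v : V → ℝ,
    normSq S.m (S.u (n + 1) ω - v) + T / N * seminormSq S.τ (S.u (n + 1) ω)
      ≤ normSq S.m (S.explicitStep n ω - v) + T / N * seminormSq S.τ v := by
  filter_upwards [S.ae_weakForm hn] with ω hω v
  simpa only [massForm_self, dirichletForm_self] using
    implicitEuler_le_of_competitor (dirichletForm_isPosSemidef S.τ_nonneg)
      (massForm_isPosSemidef fun K => (S.m_pos K).le) S.timeStep_pos.le hω v

theorem ae_normSq_succ_le (hn : n < N) :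
    ∀ᵐ ω ∂S.P, normSq S.m (S.u (n + 1) ω) ≤ normSq S.m (S.explicitStep n ω) := by
  filter_upwards [S.ae_le_of_competitor hn] with ω hω
  have dissipation := mul_nonneg S.timeStep_pos.le
    (seminormSq_nonneg S.τ_nonneg (S.u (n + 1) ω))
  have at_zero : normSq S.m (S.u (n + 1) ω) + T / N * seminormSq S.τ (S.u (n + 1) ω)
      ≤ normSq S.m (S.explicitStep n ω) := by
    simpa [seminormSq] using hω 0
  linarith

theorem ae_seminormSq_succ_le (hn : n < N) :
    ∀ᵐ ω ∂S.P, seminormSq S.τ (S.u (n + 1) ω) ≤ seminormSq S.τ (S.explicitStep n ω) := by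
  filter_upwards [S.ae_le_of_competitor hn] with ω hω
  have distance := normSq_nonneg (fun K => (S.m_pos K).le) (S.u (n + 1) ω - S.explicitStep n ω)
  have at_explicitStep := hω (S.explicitStep n ω)
  rw [sub_self, show normSq S.m 0 = 0 by simp [normSq]] at at_explicitStep
  exact le_of_mul_le_mul_left (by linarith) S.timeStep_pos

theorem memLp_u (hn : n ≤ N) : MemLp (S.u n) 2 S.P := by
  induction n with
  | zero =>
    exact memLp_two_of_integrable_normSq S.m_pos (S.measurable_u hn).aestronglyMeasurable S.u0_int
  | succ n ih =>
    have hu : AEStronglyMeasurable (S.u (n + 1)) S.P := (S.measurable_u hn).aestronglyMeasurable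
    have hy := integrable_normSq S.m (S.memLp_explicitStep hn (ih (Nat.le_of_succ_le hn)))
    refine memLp_two_of_integrable_normSq S.m_pos hu
      (hy.mono' ((continuous_normSq S.m).comp_aestronglyMeasurable hu) ?_)
    filter_upwards [S.ae_normSq_succ_le hn] with ω hω
    rwa [Real.norm_of_nonneg (normSq_nonneg (fun K => (S.m_pos K).le) _)]

theorem integral_normSq_comp_u_le (hn : n ≤ N) : ∫ ω, normSq S.m (g ∘ S.u n ω) ∂S.P
    ≤ 2 * |g 0| ^ 2 * ∑ K, S.m K + 2 * L ^ 2 * ∫ ω, normSq S.m (S.u n ω) ∂S.P := by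
  have hu := S.memLp_u hn
  have hint : Integrable (fun ω => 2 * L ^ 2 * normSq S.m (S.u n ω)) S.P :=
    (integrable_normSq S.m hu).const_mul _
  calc ∫ ω, normSq S.m (g ∘ S.u n ω) ∂S.P
      ≤ ∫ ω, (2 * |g 0| ^ 2 * ∑ K, S.m K + 2 * L ^ 2 * normSq S.m (S.u n ω)) ∂S.P :=
        integral_mono (integrable_normSq S.m (S.memLp_comp_u hu))
          ((integrable_const _).add hint) fun ω =>
            normSq_comp_le (fun K => (S.m_pos K).le) S.g_lip _
    _ = 2 * |g 0| ^ 2 * ∑ K, S.m K + 2 * L ^ 2 * ∫ ω, normSq S.m (S.u n ω) ∂S.P := by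
        rw [integral_add (integrable_const _) hint, integral_const, probReal_univ, one_smul,
          integral_const_mul]

theorem integral_seminormSq_comp_u_le (hn : n ≤ N) : ∫ ω, seminormSq S.τ (g ∘ S.u n ω) ∂S.P
    ≤ L ^ 2 * ∫ ω, seminormSq S.τ (S.u n ω) ∂S.P := by
  have hu := S.memLp_u hn
  rw [← integral_const_mul]
  exact integral_mono (integrable_seminormSq S.τ (S.memLp_comp_u hu))
    ((integrable_seminormSq S.τ hu).const_mul _) fun ω => seminormSq_comp_le S.τ_nonneg S.g_lip _

theorem integral_normSq_succ_le (hn : n < N) : ∫ ω, normSq S.m (S.u (n + 1) ω) ∂S.P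
    ≤ ∫ ω, normSq S.m (S.u n ω) ∂S.P + T / N * (2 * |g 0| ^ 2 * ∑ K, S.m K
        + 2 * L ^ 2 * ∫ ω, normSq S.m (S.u n ω) ∂S.P) := by
  have hu := S.memLp_u hn.le
  calc ∫ ω, normSq S.m (S.u (n + 1) ω) ∂S.P ≤ ∫ ω, normSq S.m (S.explicitStep n ω) ∂S.P :=
        integral_mono_ae (integrable_normSq S.m (S.memLp_u hn))
          (integrable_normSq S.m (S.memLp_explicitStep hn hu)) (S.ae_normSq_succ_le hn)
    _ = ∫ ω, normSq S.m (S.u n ω) ∂S.P + T / N * ∫ ω, normSq S.m (g ∘ S.u n ω) ∂S.P := by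
        simpa only [massForm_self, Pi.zero_apply, sub_zero] using
          S.integral_bilin_explicitStep_sub (massForm S.m) hn hu
            (@measurable_const _ _ _ (S.F _) 0) MemLp.zero
    _ ≤ _ := by
        have := S.timeStep_pos.le
        gcongr
        exact S.integral_normSq_comp_u_le hn.le

theorem integral_seminormSq_succ_le (hn : n < N) : ∫ ω, seminormSq S.τ (S.u (n + 1) ω) ∂S.P
    ≤ ∫ ω, seminormSq S.τ (S.u n ω) ∂S.P
      + T / N * (L ^ 2 * ∫ ω, seminormSq S.τ (S.u n ω) ∂S.P) := by
  have hu := S.memLp_u hn.le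
  calc ∫ ω, seminormSq S.τ (S.u (n + 1) ω) ∂S.P ≤ ∫ ω, seminormSq S.τ (S.explicitStep n ω) ∂S.P :=
        integral_mono_ae (integrable_seminormSq S.τ (S.memLp_u hn))
          (integrable_seminormSq S.τ (S.memLp_explicitStep hn hu)) (S.ae_seminormSq_succ_le hn)
    _ = ∫ ω, seminormSq S.τ (S.u n ω) ∂S.P + T / N * ∫ ω, seminormSq S.τ (g ∘ S.u n ω) ∂S.P := by
        simpa only [dirichletForm_self, Pi.zero_apply, sub_zero] using
          S.integral_bilin_explicitStep_sub (dirichletForm S.τ) hn hu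
            (@measurable_const _ _ _ (S.F _) 0) MemLp.zero
    _ ≤ _ := by
        have := S.timeStep_pos.le
        gcongr
        exact S.integral_seminormSq_comp_u_le hn.le

theorem integral_normSq_le (hn : n ≤ N) : ∫ ω, normSq S.m (S.u n ω) ∂S.P
    ≤ Real.exp (2 * L ^ 2 * T)
      * (∫ ω, normSq S.m (S.u 0 ω) ∂S.P + T * (2 * |g 0| ^ 2 * ∑ K, S.m K)) := by
  have hm (K : V) : 0 ≤ S.m K := (S.m_pos K).le
  have gronwall := le_exp_mul_of_forall_lt_step_le
    (fun k => integral_nonneg fun ω => normSq_nonneg hm (S.u k ω)) S.timeStep_pos.le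
    (mul_nonneg (by positivity) (Finset.sum_nonneg fun K _ => hm K)) (by positivity)
    (fun k hk => S.integral_normSq_succ_le hk) hn
  rwa [S.natCast_mul_timeStep] at gronwall

theorem integral_seminormSq_le (hn : n ≤ N) : ∫ ω, seminormSq S.τ (S.u n ω) ∂S.P
    ≤ Real.exp (L ^ 2 * T) * ∫ ω, seminormSq S.τ (S.u 0 ω) ∂S.P := by
  have gronwall := le_exp_mul_of_forall_lt_step_le (b := 0) (c := L ^ 2)
    (fun k => integral_nonneg fun ω => seminormSq_nonneg S.τ_nonneg (S.u k ω)) S.timeStep_pos.le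
    le_rfl (by positivity)
    (fun k hk => (S.integral_seminormSq_succ_le hk).trans_eq (by rw [zero_add])) hn
  rwa [S.natCast_mul_timeStep, mul_zero, add_zero] at gronwall

theorem integral_normSq_succ_sub_le {i j : ℕ} (hij : i ≤ j) (hj : j < N) :
    ∫ ω, normSq S.m (S.u (j + 1) ω - S.u i ω) ∂S.P
      ≤ ∫ ω, normSq S.m (S.u j ω - S.u i ω) ∂S.P
        + T / N * (∫ ω, seminormSq S.τ (S.u i ω) ∂S.P
          + ∫ ω, normSq S.m (g ∘ S.u j ω) ∂S.P) := by
  have hi := hij.trans hj.le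
  have hui := S.memLp_u hi
  have past : Measurable[S.F (j * (T / N))] (S.u i) :=
    (S.u_meas i hi).mono (S.F_mono (by have := S.timeStep_pos.le; gcongr)) le_rfl
  have hy : Integrable (fun ω => normSq S.m (S.explicitStep j ω - S.u i ω)) S.P :=
    integrable_normSq S.m ((S.memLp_explicitStep hj (S.memLp_u hj.le)).sub hui)
  have hDirichlet := (integrable_seminormSq S.τ hui).const_mul (T / N)
  have competitor : ∀ᵐ ω ∂S.P, normSq S.m (S.u (j + 1) ω - S.u i ω)
      ≤ normSq S.m (S.explicitStep j ω - S.u i ω) + T / N * seminormSq S.τ (S.u i ω) := by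
    filter_upwards [S.ae_le_of_competitor hj] with ω hω
    have dissipation := mul_nonneg S.timeStep_pos.le
      (seminormSq_nonneg S.τ_nonneg (S.u (j + 1) ω))
    linarith [hω (S.u i ω)]
  have isometry := S.integral_bilin_explicitStep_sub (massForm S.m) hj (S.memLp_u hj.le) past hui
  simp only [massForm_self] at isometry
  calc ∫ ω, normSq S.m (S.u (j + 1) ω - S.u i ω) ∂S.P
      ≤ ∫ ω, (normSq S.m (S.explicitStep j ω - S.u i ω) + T / N * seminormSq S.τ (S.u i ω)) ∂S.P :=
        integral_mono_ae (integrable_normSq S.m ((S.memLp_u hj).sub hui)) (hy.add hDirichlet)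
          competitor
    _ = _ := by
        rw [integral_add hy hDirichlet, isometry, integral_const_mul]
        ring

/-- The value of `incrementRate` for the data of the scheme `S`. -/
noncomputable def rate : ℝ :=
  incrementRate T L (2 * |g 0| ^ 2 * ∑ K, S.m K) (∫ ω, normSq S.m (S.u 0 ω) ∂S.P)
    (∫ ω, seminormSq S.τ (S.u 0 ω) ∂S.P)

theorem rate_nonneg : 0 ≤ S.rate :=
  have hm (K : V) : 0 ≤ S.m K := (S.m_pos K).le
  incrementRate_nonneg S.T_pos.le (mul_nonneg (by positivity) (Finset.sum_nonneg fun K _ => hm K))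
    (integral_nonneg fun ω => normSq_nonneg hm _)
    (integral_nonneg fun ω => seminormSq_nonneg S.τ_nonneg _)

theorem rate_le {g₀ A e₀ d₀ : ℝ} (hg : |g 0| ≤ g₀) (hA : ∑ K, S.m K ≤ A)
    (he : ∫ ω, normSq S.m (S.u 0 ω) ∂S.P ≤ e₀) (hd : ∫ ω, seminormSq S.τ (S.u 0 ω) ∂S.P ≤ d₀) :
    S.rate ≤ incrementRate T L (2 * g₀ ^ 2 * A) e₀ d₀ := by
  have := S.T_pos
  have : 0 ≤ ∑ K, S.m K := Finset.sum_nonneg fun K _ => (S.m_pos K).le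
  unfold rate incrementRate
  gcongr

theorem integral_seminormSq_add_normSq_comp_le_rate {i j : ℕ} (hi : i ≤ N) (hj : j ≤ N) :
    ∫ ω, seminormSq S.τ (S.u i ω) ∂S.P + ∫ ω, normSq S.m (g ∘ S.u j ω) ∂S.P ≤ S.rate := by
  refine add_le_add (S.integral_seminormSq_le hi) ((S.integral_normSq_comp_u_le hj).trans ?_)
  gcongr
  exact S.integral_normSq_le hj

theorem integral_normSq_add_sub_le {i k : ℕ} (h : i + k ≤ N) :
    ∫ ω, normSq S.m (S.u (i + k) ω - S.u i ω) ∂S.P ≤ k * (T / N * S.rate) := by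
  induction k with
  | zero => simp [normSq]
  | succ k ih =>
    have rate := mul_le_mul_of_nonneg_left
      (S.integral_seminormSq_add_normSq_comp_le_rate (Nat.le_of_add_right_le h)
        (Nat.le_of_succ_le h)) S.timeStep_pos.le
    push_cast
    linear_combination S.integral_normSq_succ_sub_le (Nat.le_add_right i k) h
      + rate + ih (Nat.le_of_succ_le h)

end BScheme

section FractionalKernel

open scoped ENNReal

/-- The kernel `|t - s|^{-(1+2α)}` of the Gagliardo seminorm of order `α` in time, at the pair of
times `(t, s)`. The junk value `0⁻¹ = 0` makes it vanish on the diagonal. -/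
noncomputable def gagliardoKernel (α : ℝ) (z : ℝ × ℝ) : ℝ≥0∞ :=
  ENNReal.ofReal (|z.1 - z.2| ^ (1 + 2 * α))⁻¹

/-- The pairs of times that lie on different sides of `c`, where `c` itself counts as lying on its
right. -/
def straddlingPairs (c : ℝ) : Set (ℝ × ℝ) :=
  {z | min z.1 z.2 < c ∧ c ≤ max z.1 z.2}

/-- The mass of the kernel of order `α` on `(-∞, c) × (c, c + T]`, which does not depend on `c`. -/
noncomputable def straddlingMass (α T : ℝ) : ℝ :=
  T ^ (1 - 2 * α) / ((1 - 2 * α) * (2 * α))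

theorem straddlingMass_pos {α T : ℝ} (hα₀ : 0 < α) (hα : α < 1 / 2) (hT : 0 < T) :
    0 < straddlingMass α T := by
  have : 0 < 1 - 2 * α := by linarith
  unfold straddlingMass
  positivity

theorem measurable_gagliardoKernel (α : ℝ) : Measurable (gagliardoKernel α) := by
  unfold gagliardoKernel
  fun_prop

theorem gagliardoKernel_swap (α : ℝ) (z : ℝ × ℝ) :
    gagliardoKernel α z.swap = gagliardoKernel α z := by
  simp only [gagliardoKernel, Prod.fst_swap, Prod.snd_swap, abs_sub_comm]

theorem measurableSet_straddlingPairs (c : ℝ) : MeasurableSet (straddlingPairs c) :=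
  (measurableSet_lt (measurable_fst.min measurable_snd) measurable_const).inter
    (measurableSet_le measurable_const (measurable_fst.max measurable_snd))

variable {α T c : ℝ}

theorem setLIntegral_Iio_gagliardoKernel (hα : 0 < α) {t : ℝ} (hct : c < t) :
    ∫⁻ s in Set.Iio c, gagliardoKernel α (t, s)
      = ENNReal.ofReal ((t - c) ^ (-(2 * α)) / (2 * α)) := by
  have exponent : -(1 + 2 * α) < -1 := by linarith
  have hpos : 0 < t - c := sub_pos.2 hct
  have image : (fun s => t - s) ⁻¹' Set.Ioi (t - c) = Set.Iio c := by
    rw [Set.preimage_const_sub_Ioi, sub_sub_cancel]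
  calc ∫⁻ s in Set.Iio c, gagliardoKernel α (t, s)
      = ∫⁻ s in Set.Iio c, ENNReal.ofReal ((t - s) ^ (-(1 + 2 * α))) :=
        setLIntegral_congr_fun measurableSet_Iio fun s hs => by
          have := sub_pos.2 (lt_trans hs hct)
          rw [gagliardoKernel, abs_of_pos this, Real.rpow_neg this.le]
    _ = ∫⁻ r in Set.Ioi (t - c), ENNReal.ofReal (r ^ (-(1 + 2 * α))) := by
        rw [← image]
        exact (Measure.measurePreserving_sub_left volume t).setLIntegral_comp_preimage
          measurableSet_Ioi
          (f := fun r => ENNReal.ofReal (r ^ (-(1 + 2 * α)))) (by fun_prop)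
    _ = ENNReal.ofReal (∫ r in Set.Ioi (t - c), r ^ (-(1 + 2 * α))) :=
        (ofReal_integral_eq_lintegral_ofReal (integrableOn_Ioi_rpow_of_lt exponent hpos)
          (ae_restrict_of_forall_mem measurableSet_Ioi fun r hr =>
            Real.rpow_nonneg (hpos.trans hr).le _)).symm
    _ = ENNReal.ofReal ((t - c) ^ (-(2 * α)) / (2 * α)) := by
        rw [integral_Ioi_rpow_of_lt exponent hpos, show -(1 + 2 * α) + 1 = -(2 * α) by ring,
          neg_div_neg_eq]

theorem setLIntegral_Ioc_rpow_sub (hα₀ : 0 < α) (hα : α < 1 / 2) (hT : 0 ≤ T) :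
    ∫⁻ t in Set.Ioc c (c + T), ENNReal.ofReal ((t - c) ^ (-(2 * α)) / (2 * α))
      = ENNReal.ofReal (straddlingMass α T) := by
  have exponent : -1 < -(2 * α) := by linarith
  have image : (fun t => t - c) ⁻¹' Set.Ioc 0 T = Set.Ioc c (c + T) := by
    rw [Set.preimage_sub_const_Ioc, zero_add, add_comm]
  have integrable :=
    (intervalIntegral.intervalIntegrable_rpow' (a := 0) (b := T) exponent).div_const (2 * α)
  calc ∫⁻ t in Set.Ioc c (c + T), ENNReal.ofReal ((t - c) ^ (-(2 * α)) / (2 * α))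
      = ∫⁻ r in Set.Ioc 0 T, ENNReal.ofReal (r ^ (-(2 * α)) / (2 * α)) := by
        rw [← image]
        exact (measurePreserving_sub_right volume c).setLIntegral_comp_preimage measurableSet_Ioc
          (f := fun r => ENNReal.ofReal (r ^ (-(2 * α)) / (2 * α))) (by fun_prop)
    _ = ENNReal.ofReal (∫ r in (0 : ℝ)..T, r ^ (-(2 * α)) / (2 * α)) := by
        rw [intervalIntegral.integral_of_le hT]
        refine (ofReal_integral_eq_lintegral_ofReal
          ((intervalIntegrable_iff_integrableOn_Ioc_of_le hT).1 integrable)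
          (ae_restrict_of_forall_mem measurableSet_Ioc fun r hr => ?_)).symm
        have := Real.rpow_nonneg hr.1.le (-(2 * α))
        simp only [Pi.zero_apply]
        positivity
    _ = ENNReal.ofReal (straddlingMass α T) := by
        rw [intervalIntegral.integral_div, integral_rpow (Or.inl exponent),
          show -(2 * α) + 1 = 1 - 2 * α by ring, Real.zero_rpow (by linarith), sub_zero, div_div,
          straddlingMass]

theorem setLIntegral_prod_gagliardoKernel (hα₀ : 0 < α) (hα : α < 1 / 2) (hT : 0 ≤ T) :
    ∫⁻ z in Set.Icc c (c + T) ×ˢ Set.Iio c, gagliardoKernel α z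
      = ENNReal.ofReal (straddlingMass α T) := by
  rw [Measure.volume_eq_prod, setLIntegral_prod _ (measurable_gagliardoKernel α).aemeasurable,
    ← restrict_Ioc_eq_restrict_Icc, ← setLIntegral_Ioc_rpow_sub hα₀ hα hT]
  exact setLIntegral_congr_fun measurableSet_Ioc fun t ht =>
    setLIntegral_Iio_gagliardoKernel hα₀ ht.1

theorem setLIntegral_prod_gagliardoKernel_swap (hα₀ : 0 < α) (hα : α < 1 / 2) (hT : 0 ≤ T) :
    ∫⁻ z in Set.Iio c ×ˢ Set.Icc c (c + T), gagliardoKernel α z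
      = ENNReal.ofReal (straddlingMass α T) := by
  have hκ := (measurable_gagliardoKernel α).aemeasurable (μ := volume)
  rw [← setLIntegral_prod_gagliardoKernel hα₀ hα hT (c := c), Measure.volume_eq_prod,
    setLIntegral_prod_symm _ hκ.restrict, setLIntegral_prod _ hκ.restrict]
  exact lintegral_congr fun t => lintegral_congr fun s => gagliardoKernel_swap α (t, s)

theorem setLIntegral_straddlingPairs_le (hα₀ : 0 < α) (hα : α < 1 / 2) (hT : 0 ≤ T) (hc : 0 ≤ c) :
    ∫⁻ z in straddlingPairs c ∩ Set.Ioc 0 T ×ˢ Set.Ioc 0 T, gagliardoKernel α z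
      ≤ ENNReal.ofReal (2 * straddlingMass α T) := by
  have cover : straddlingPairs c ∩ Set.Ioc 0 T ×ˢ Set.Ioc 0 T
      ⊆ Set.Icc c (c + T) ×ˢ Set.Iio c ∪ Set.Iio c ×ˢ Set.Icc c (c + T) := by
    rintro ⟨t, s⟩ ⟨⟨hmin, hmax⟩, ⟨-, ht⟩, ⟨-, hs⟩⟩
    simp only [Set.mem_union, Set.mem_prod, Set.mem_Icc, Set.mem_Iio] at *
    grind
  calc ∫⁻ z in straddlingPairs c ∩ Set.Ioc 0 T ×ˢ Set.Ioc 0 T, gagliardoKernel α z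
      ≤ (∫⁻ z in Set.Icc c (c + T) ×ˢ Set.Iio c, gagliardoKernel α z)
        + ∫⁻ z in Set.Iio c ×ˢ Set.Icc c (c + T), gagliardoKernel α z :=
        (lintegral_mono_set cover).trans (lintegral_union_le _ _ _)
    _ = ENNReal.ofReal (2 * straddlingMass α T) := by
        rw [setLIntegral_prod_gagliardoKernel hα₀ hα hT,
          setLIntegral_prod_gagliardoKernel_swap hα₀ hα hT, ENNReal.ofReal_mul zero_le_two,
          ENNReal.ofReal_ofNat, two_mul]

variable {N : ℕ}

theorem measurable_timeIdx (T : ℝ) (N : ℕ) : Measurable (timeIdx T N) :=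
  (Nat.measurable_floor.comp (measurable_id.div_const _)).min measurable_const

theorem timeIdx_le (T : ℝ) (N : ℕ) (t : ℝ) : timeIdx T N t ≤ N - 1 :=
  min_le_right _ _

theorem lt_gridTime_le_of_mem_Ioc_timeIdx {s t : ℝ} {k : ℕ} (hT : 0 < T)
    (hk : k ∈ Finset.Ioc (timeIdx T N s) (timeIdx T N t)) :
    k < N ∧ s < k * (T / N) ∧ k * (T / N) ≤ t := by
  simp only [Finset.mem_Ioc, timeIdx] at hk
  have hN : k < N := by omega
  have hk₀ : k ≠ 0 := by omega
  have hstep : 0 < T / N := div_pos hT (by exact_mod_cast Nat.zero_lt_of_lt hN)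
  refine ⟨hN, ?_, ?_⟩
  · rw [← div_lt_iff₀ hstep, ← Nat.floor_lt' hk₀]
    omega
  · rw [← le_div_iff₀ hstep, ← Nat.le_floor_iff' hk₀]
    omega

theorem dist_timeIdx_le_sum_indicator (hT : 0 < T) (z : ℝ × ℝ) :
    (Nat.dist (timeIdx T N z.1) (timeIdx T N z.2) : ℝ≥0∞)
      ≤ ∑ k ∈ Finset.range N, (straddlingPairs (k * (T / N))).indicator 1 z := by
  have ordered {i j : ℕ} (hij : i ≤ j) (hgrid : ∀ k ∈ Finset.Ioc i j,
      k < N ∧ z ∈ straddlingPairs (k * (T / N))) : (Nat.dist i j : ℝ≥0∞)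
      ≤ ∑ k ∈ Finset.range N, (straddlingPairs (k * (T / N))).indicator 1 z := by
    calc (Nat.dist i j : ℝ≥0∞) = ∑ _k ∈ Finset.Ioc i j, (1 : ℝ≥0∞) := by
          rw [Nat.dist_eq_sub_of_le hij, Finset.sum_const, Nat.card_Ioc, nsmul_one]
      _ = ∑ k ∈ Finset.Ioc i j, (straddlingPairs (k * (T / N))).indicator 1 z :=
          Finset.sum_congr rfl fun k hk => by rw [Set.indicator_of_mem (hgrid k hk).2, Pi.one_apply]
      _ ≤ _ := Finset.sum_le_sum_of_subset fun k hk => Finset.mem_range.2 (hgrid k hk).1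
  rcases le_total (timeIdx T N z.1) (timeIdx T N z.2) with hle | hle
  · refine ordered hle fun k hk => ?_
    obtain ⟨hN, hlt, hge⟩ := lt_gridTime_le_of_mem_Ioc_timeIdx hT hk
    exact ⟨hN, min_lt_of_left_lt hlt, le_max_of_le_right hge⟩
  · rw [Nat.dist_comm]
    refine ordered hle fun k hk => ?_
    obtain ⟨hN, hlt, hge⟩ := lt_gridTime_le_of_mem_Ioc_timeIdx hT hk
    exact ⟨hN, min_lt_of_right_lt hlt, le_max_of_le_left hge⟩

theorem setLIntegral_dist_timeIdx_mul_le (hα₀ : 0 < α) (hα : α < 1 / 2) (hT : 0 < T) :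
    ∫⁻ z in Set.Ioc 0 T ×ˢ Set.Ioc 0 T,
        Nat.dist (timeIdx T N z.1) (timeIdx T N z.2) * gagliardoKernel α z
      ≤ N * ENNReal.ofReal (2 * straddlingMass α T) := by
  calc ∫⁻ z in Set.Ioc 0 T ×ˢ Set.Ioc 0 T,
        Nat.dist (timeIdx T N z.1) (timeIdx T N z.2) * gagliardoKernel α z
      ≤ ∫⁻ z in Set.Ioc 0 T ×ˢ Set.Ioc 0 T, ∑ k ∈ Finset.range N,
          (straddlingPairs (k * (T / N))).indicator (gagliardoKernel α) z := by
        refine lintegral_mono fun z => ?_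
        refine (mul_le_mul_left (dist_timeIdx_le_sum_indicator hT z) _).trans_eq ?_
        simp only [Finset.sum_mul, ← Set.indicator_mul_left, Pi.one_apply, one_mul]
    _ = ∑ k ∈ Finset.range N, ∫⁻ z in straddlingPairs (k * (T / N)) ∩ Set.Ioc 0 T ×ˢ Set.Ioc 0 T,
          gagliardoKernel α z := by
        rw [lintegral_finsetSum _ fun k _ =>
          (measurable_gagliardoKernel α).indicator (measurableSet_straddlingPairs _)]
        simp only [setLIntegral_indicator (measurableSet_straddlingPairs _)]
    _ ≤ ∑ _k ∈ Finset.range N, ENNReal.ofReal (2 * straddlingMass α T) :=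
        Finset.sum_le_sum fun k _ =>
          setLIntegral_straddlingPairs_le hα₀ hα hT.le (by positivity)
    _ = N * ENNReal.ofReal (2 * straddlingMass α T) := by
        rw [Finset.sum_const, Finset.card_range, nsmul_eq_mul]

theorem lintegral_mul_gagliardoKernel_le {Ω : Type*} [MeasurableSpace Ω] {μ : Measure Ω} [SFinite μ]
    {f : Ω → ℝ × ℝ → ℝ≥0∞} {C : ℝ≥0∞} (hf : Measurable (Function.uncurry f))
    (hle : ∀ z, ∫⁻ ω, f ω z ∂μ ≤ C * Nat.dist (timeIdx T N z.1) (timeIdx T N z.2))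
    (hα₀ : 0 < α) (hα : α < 1 / 2) (hT : 0 < T) :
    ∫⁻ ω, (∫⁻ z in Set.Ioc 0 T ×ˢ Set.Ioc 0 T, f ω z * gagliardoKernel α z) ∂μ
      ≤ C * (N * ENNReal.ofReal (2 * straddlingMass α T)) := by
  have hκ := measurable_gagliardoKernel α
  have measurable_dist : Measurable fun p : ℕ × ℕ => Nat.dist p.1 p.2 := measurable_of_countable _
  have measurable_idx : Measurable fun z : ℝ × ℝ =>
      (Nat.dist (timeIdx T N z.1) (timeIdx T N z.2) : ℝ≥0∞) := by
    have := measurable_timeIdx T N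
    fun_prop
  calc ∫⁻ ω, (∫⁻ z in Set.Ioc 0 T ×ˢ Set.Ioc 0 T, f ω z * gagliardoKernel α z) ∂μ
      = ∫⁻ z in Set.Ioc 0 T ×ˢ Set.Ioc 0 T, (∫⁻ ω, f ω z ∂μ) * gagliardoKernel α z := by
        rw [lintegral_lintegral_swap (hf.mul (hκ.comp measurable_snd)).aemeasurable]
        exact lintegral_congr fun z => lintegral_mul_const _ hf.of_uncurry_right
    _ ≤ ∫⁻ z in Set.Ioc 0 T ×ˢ Set.Ioc 0 T,
          C * (Nat.dist (timeIdx T N z.1) (timeIdx T N z.2) * gagliardoKernel α z) :=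
        lintegral_mono fun z => by
          rw [← mul_assoc]
          exact mul_le_mul_left (hle z) _
    _ ≤ C * (N * ENNReal.ofReal (2 * straddlingMass α T)) := by
        rw [lintegral_const_mul _ (by exact measurable_idx.mul hκ)]
        exact mul_le_mul_right (setLIntegral_dist_timeIdx_mul_le hα₀ hα hT) _

theorem integral_intervalIntegral_le_of_lintegral_le {Ω : Type*} [MeasurableSpace Ω] {μ : Measure Ω}
    {f : Ω → ℝ × ℝ → ℝ} {a b a' b' C : ℝ} (hab : a ≤ b) (hab' : a' ≤ b')
    (hf : ∀ ω, Measurable (f ω)) (hC : 0 ≤ C)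
    (hle : ∫⁻ ω, (∫⁻ z in Set.Ioc a b ×ˢ Set.Ioc a' b', ‖f ω z‖ₑ) ∂μ ≤ ENNReal.ofReal C) :
    ∫ ω, (∫ t in a..b, ∫ s in a'..b', f ω (t, s)) ∂μ ≤ C := by
  have enorm_le : ‖∫ ω, (∫ t in a..b, ∫ s in a'..b', f ω (t, s)) ∂μ‖ₑ ≤ ENNReal.ofReal C := by
    refine (enorm_integral_le_lintegral_enorm _).trans ((lintegral_mono fun ω => ?_).trans hle)
    rw [Measure.volume_eq_prod, setLIntegral_prod _ (hf ω).enorm.aemeasurable,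
      intervalIntegral.integral_of_le hab]
    refine (enorm_integral_le_lintegral_enorm _).trans (lintegral_mono fun t => ?_)
    rw [intervalIntegral.integral_of_le hab']
    exact enorm_integral_le_lintegral_enorm _
  rw [← ofReal_norm, ENNReal.ofReal_le_ofReal_iff hC] at enorm_le
  exact (le_abs_self _).trans enorm_le

end FractionalKernel

namespace BScheme

open scoped ENNReal

variable {V : Type} [Fintype V] [Nonempty V] {Ω : Type} [MeasurableSpace Ω] {T L : ℝ}
  {g : ℝ → ℝ} {N : ℕ} (S : BScheme V Ω T L g N)

theorem integral_normSq_sub_le {i j : ℕ} (hi : i ≤ N) (hj : j ≤ N) :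
    ∫ ω, normSq S.m (S.u j ω - S.u i ω) ∂S.P ≤ Nat.dist i j * (T / N * S.rate) := by
  wlog hij : i ≤ j generalizing i j
  · simpa only [Nat.dist_comm j i, normSq_sub_comm S.m (S.u i _)] using
      this hj hi (Nat.le_of_not_ge hij)
  obtain ⟨k, rfl⟩ := Nat.exists_eq_add_of_le hij
  rw [Nat.dist_eq_sub_of_le hij, Nat.add_sub_cancel_left]
  exact S.integral_normSq_add_sub_le hj

theorem lintegral_normSq_ul_sub_le (s t : ℝ) :
    ∫⁻ ω, ENNReal.ofReal (normSq S.m (ul T N S.u s ω - ul T N S.u t ω)) ∂S.P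
      ≤ ENNReal.ofReal (T / N * S.rate) * Nat.dist (timeIdx T N t) (timeIdx T N s) := by
  have hidx (r : ℝ) : timeIdx T N r ≤ N := (timeIdx_le T N r).trans (Nat.sub_le _ _)
  have hint : Integrable (fun ω => normSq S.m (ul T N S.u s ω - ul T N S.u t ω)) S.P :=
    integrable_normSq S.m ((S.memLp_u (hidx s)).sub (S.memLp_u (hidx t)))
  rw [← ofReal_integral_eq_lintegral_ofReal hint (ae_of_all _ fun ω =>
    normSq_nonneg (fun K => (S.m_pos K).le) _), ← ENNReal.ofReal_natCast, mul_comm,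
    ← ENNReal.ofReal_mul (Nat.cast_nonneg _)]
  exact ENNReal.ofReal_le_ofReal (S.integral_normSq_sub_le (hidx t) (hidx s))

theorem measurable_uncurry_ul : Measurable fun p : ℝ × Ω => ul T N S.u p.1 p.2 := by
  have grid : Measurable fun p : ℕ × Ω => S.u (min p.1 (N - 1)) p.2 :=
    measurable_from_prod_countable_right fun n =>
      S.measurable_u ((min_le_right n (N - 1)).trans (Nat.sub_le N 1))
  have := grid.comp ((measurable_timeIdx T N).prodMap measurable_id)
  simpa only [ul, Function.comp_def, Prod.map, id, min_eq_left (timeIdx_le T N _)] using this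

theorem measurable_normSq_ul_sub : Measurable fun p : Ω × (ℝ × ℝ) =>
    normSq S.m (ul T N S.u p.2.2 p.1 - ul T N S.u p.2.1 p.1) := by
  refine (continuous_normSq S.m).measurable.comp (Measurable.sub ?_ ?_)
  · exact S.measurable_uncurry_ul.comp (measurable_snd.snd.prodMk measurable_fst)
  · exact S.measurable_uncurry_ul.comp (measurable_snd.fst.prodMk measurable_fst)

theorem lintegral_gagliardo_ul_le {α : ℝ} (hα₀ : 0 < α) (hα : α < 1 / 2) :
    ∫⁻ ω, (∫⁻ z in Set.Ioc 0 T ×ˢ Set.Ioc 0 T,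
        ENNReal.ofReal (normSq S.m (ul T N S.u z.2 ω - ul T N S.u z.1 ω))
          * gagliardoKernel α z) ∂S.P
      ≤ ENNReal.ofReal (T * S.rate * (2 * straddlingMass α T)) := by
  refine (lintegral_mul_gagliardoKernel_le S.measurable_normSq_ul_sub.ennreal_ofReal
    (fun z => S.lintegral_normSq_ul_sub_le z.2 z.1) hα₀ hα S.T_pos).trans_eq ?_
  rw [← ENNReal.ofReal_natCast N, ← ENNReal.ofReal_mul (Nat.cast_nonneg N),
    ← ENNReal.ofReal_mul (mul_nonneg S.timeStep_pos.le S.rate_nonneg)]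
  congr 1
  linear_combination S.rate * (2 * straddlingMass α T) * S.natCast_mul_timeStep

theorem integral_gagliardo_ul_le {α : ℝ} (hα₀ : 0 < α) (hα : α < 1 / 2) :
    ∫ ω, (∫ t in (0 : ℝ)..T, ∫ s in (0 : ℝ)..T,
        normSq S.m (ul T N S.u s ω - ul T N S.u t ω) / |t - s| ^ (1 + 2 * α)) ∂S.P
      ≤ T * S.rate * (2 * straddlingMass α T) := by
  refine integral_intervalIntegral_le_of_lintegral_le (f := fun ω z =>
    normSq S.m (ul T N S.u z.2 ω - ul T N S.u z.1 ω) / |z.1 - z.2| ^ (1 + 2 * α))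
    S.T_pos.le S.T_pos.le (fun ω => ?_) ?_ ?_
  · exact (S.measurable_normSq_ul_sub.comp measurable_prodMk_left).div (by fun_prop)
  · have := straddlingMass_pos hα₀ hα S.T_pos
    have := S.T_pos
    have := S.rate_nonneg
    positivity
  · refine (lintegral_mono fun ω => lintegral_mono fun z => ?_).trans
      (S.lintegral_gagliardo_ul_le hα₀ hα)
    have increment_nonneg := normSq_nonneg (fun K => (S.m_pos K).le)
      (ul T N S.u z.2 ω - ul T N S.u z.1 ω)
    rw [Real.enorm_of_nonneg (by positivity), div_eq_mul_inv, ENNReal.ofReal_mul increment_nonneg,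
      gagliardoKernel]

end BScheme

/-- **Lemma 3.10, fractional Sobolev-in-time bound for `u^l`.**
For every `α ∈ (0, 1/2)` and all `T > 0`, `L ≥ 0`, `g₀ ≥ 0`, `A > 0`, `B ≥ 0`,
`D ≥ 0` there is a constant `C ≥ 0`, depending only on `α, T, L, g₀, A, B, D`,
such that for every scheme (with `Σ m K ≤ A`, `|g 0| ≤ g₀`, `E[‖u⁰‖_m²] ≤ B`,
`E[|u⁰|₁²] ≤ D`):
`E[∫₀^T ∫₀^T ‖u^l(s) − u^l(t)‖_m² / |t − s|^{1+2α} ds dt] ≤ C`. -/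
theorem fractional_sobolev_bound_ul (α T L g₀ A B D : ℝ)
    (hα₀ : 0 < α) (hα₁ : α < 1 / 2)
    (hT : 0 < T) (hL : 0 ≤ L) (hg₀ : 0 ≤ g₀) (hA : 0 < A) (hB : 0 ≤ B) (hD : 0 ≤ D) :
    ∃ C : ℝ, 0 ≤ C ∧
      ∀ (V : Type) [Fintype V] [Nonempty V]
        (Ω : Type) [MeasurableSpace Ω] (g : ℝ → ℝ) (N : ℕ)
        (S : BScheme V Ω T L g N),
        |g 0| ≤ g₀ → (∑ K, S.m K) ≤ A →
        (∫ ω, normSq S.m (S.u 0 ω) ∂S.P) ≤ B →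
        (∫ ω, seminormSq S.τ (S.u 0 ω) ∂S.P) ≤ D →
        (∫ ω, (∫ t in (0:ℝ)..T, ∫ s in (0:ℝ)..T,
            normSq S.m (fun K => ul T N S.u s ω K - ul T N S.u t ω K)
              / |t - s| ^ (1 + 2 * α)) ∂S.P)
          ≤ C := by
  have hm : 0 < straddlingMass α T := straddlingMass_pos hα₀ hα₁ hT
  refine ⟨T * incrementRate T L (2 * g₀ ^ 2 * A) B D * (2 * straddlingMass α T), ?_, ?_⟩
  · have := incrementRate_nonneg (L := L) hT.le (by positivity : 0 ≤ 2 * g₀ ^ 2 * A) hB hD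
    positivity
  intro V _ _ Ω _ g N S hg hA' hB' hD'
  refine (S.integral_gagliardo_ul_le hα₀ hα₁).trans ?_
  gcongr
  exact S.rate_le hg hA' hB' hD'
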